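/- The consistent Bellman operator 𝒯_c has a unique fixed point: there exists a unique f* : S × A → ℝ with 𝒯_c f* = f*, and for any initial function f₀ : S × A → ℝ the sequence defined by f_{n+1} = 𝒯_c f_n converges to f* in the sup norm. -/

import Mathlib

/-!
The sup norm of `supNorm` is the norm of the pi type `S × A → ℝ`, which is complete. Both
backup values `max_{a'} f (s', a')` and `f (s, a)` are monotone in `f` and move by at most
`dist f g` when `f` is replaced by `g`; averaging them against the probability vector `p s a`
preserves this bound, so `consistentBellman` is `γ`-Lipschitz (`consistentBellman_contracting`)
and the Banach fixed point theorem applies.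
-/

/-- The sup norm of a real-valued function on a nonempty finite type. -/
noncomputable def supNorm {ι : Type*} [Fintype ι] [Nonempty ι] (f : ι → ℝ) : ℝ :=
  Finset.univ.sup' Finset.univ_nonempty (fun i => |f i|)

/-- The consistent Bellman operator:
`(𝒯_c f)(s, a) = r s a + γ * ∑ s', p s a s' *
  (if s' ≠ s then max_{a'} f (s', a') else f (s, a))`. -/
noncomputable def consistentBellman {S A : Type*} [Fintype S] [DecidableEq S]
    [Fintype A] [Nonempty A]
    (p : S → A → S → ℝ) (r : S → A → ℝ) (γ : ℝ) (f : S × A → ℝ) : S × A → ℝ :=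
  fun x => r x.1 x.2 + γ * ∑ s', p x.1 x.2 s' *
    (if s' ≠ x.1 then Finset.univ.sup' Finset.univ_nonempty (fun a' => f (s', a'))
     else f x)

theorem supNorm_eq_norm {ι : Type*} [Fintype ι] [Nonempty ι] (f : ι → ℝ) :
    supNorm f = ‖f‖ := by
  apply le_antisymm
  · exact Finset.sup'_le _ _ fun i _ => norm_le_pi_norm f i
  · rw [pi_norm_le_iff_of_nonempty]
    exact fun i => Finset.le_sup' (fun i => |f i|) (Finset.mem_univ i)

/-- One-sided contraction estimate; the other side follows by exchanging `f` and `g`. -/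
theorem consistentBellman_le_add {S A : Type*} [Fintype S] [DecidableEq S]
    [Fintype A] [Nonempty A]
    (p : S → A → S → ℝ) (hp0 : ∀ s a s', 0 ≤ p s a s')
    (hp1 : ∀ s a, ∑ s', p s a s' = 1)
    (r : S → A → ℝ) (γ : ℝ) (hγ0 : 0 ≤ γ) (f g : S × A → ℝ) (x : S × A) :
    consistentBellman p r γ f x ≤ consistentBellman p r γ g x + γ * dist f g := by
  have hfg : ∀ y, f y ≤ g y + dist f g := fun y => by
    have h := dist_le_pi_dist f g y
    rw [Real.dist_eq] at h
    linarith [le_abs_self (f y - g y)]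
  have hsum : (∑ s', p x.1 x.2 s' *
        (if s' ≠ x.1 then Finset.univ.sup' Finset.univ_nonempty (fun a' => f (s', a'))
         else f x)) ≤
      (∑ s', p x.1 x.2 s' *
        (if s' ≠ x.1 then Finset.univ.sup' Finset.univ_nonempty (fun a' => g (s', a'))
         else g x)) + dist f g := by
    calc _ ≤ ∑ s', p x.1 x.2 s' *
        ((if s' ≠ x.1 then Finset.univ.sup' Finset.univ_nonempty (fun a' => g (s', a'))
         else g x) + dist f g) := by
          refine Finset.sum_le_sum fun s' _ => mul_le_mul_of_nonneg_left ?_ (hp0 _ _ _)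
          split_ifs
          · refine Finset.sup'_le _ _ fun a _ => (hfg _).trans ?_
            gcongr
            exact Finset.le_sup' (fun a' => g (s', a')) (Finset.mem_univ a)
          · exact hfg x
      _ = _ := by simp only [mul_add, Finset.sum_add_distrib, ← Finset.sum_mul, hp1, one_mul]
  have h := mul_le_mul_of_nonneg_left hsum hγ0
  simp only [consistentBellman]
  linarith

theorem consistentBellman_contracting {S A : Type*} [Fintype S] [DecidableEq S]
    [Fintype A] [Nonempty A]
    (p : S → A → S → ℝ) (hp0 : ∀ s a s', 0 ≤ p s a s')
    (hp1 : ∀ s a, ∑ s', p s a s' = 1)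
    (r : S → A → ℝ) (γ : ℝ) (hγ0 : 0 ≤ γ) (hγ1 : γ < 1) :
    ContractingWith ⟨γ, hγ0⟩ (consistentBellman p r γ) := by
  refine ⟨hγ1, LipschitzWith.of_dist_le_mul fun f g => ?_⟩
  change _ ≤ γ * dist f g
  refine (dist_pi_le_iff (mul_nonneg hγ0 dist_nonneg)).2 fun x => ?_
  have h₁ := consistentBellman_le_add p hp0 hp1 r γ hγ0 f g x
  have h₂ := consistentBellman_le_add p hp0 hp1 r γ hγ0 g f x
  rw [dist_comm g f] at h₂
  rw [Real.dist_eq, abs_le]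
  constructor <;> linarith

/-- The consistent Bellman operator has a unique fixed point `f*`, and iteration from any
`f₀` converges to `f*` in the sup norm. -/
theorem consistentBellman_fixedPoint {S A : Type*} [Fintype S] [Nonempty S] [DecidableEq S]
    [Fintype A] [Nonempty A]
    (p : S → A → S → ℝ) (hp0 : ∀ s a s', 0 ≤ p s a s')
    (hp1 : ∀ s a, ∑ s', p s a s' = 1)
    (r : S → A → ℝ) (γ : ℝ) (hγ0 : 0 ≤ γ) (hγ1 : γ < 1) :
    ∃ fstar : S × A → ℝ,
      (consistentBellman p r γ fstar = fstar ∧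
        ∀ g : S × A → ℝ, consistentBellman p r γ g = g → g = fstar) ∧
      ∀ f₀ : S × A → ℝ,
        Filter.Tendsto
          (fun n => supNorm (fun x => ((consistentBellman p r γ)^[n] f₀) x - fstar x))
          Filter.atTop (nhds 0) := by
  have hT := consistentBellman_contracting p hp0 hp1 r γ hγ0 hγ1
  refine ⟨hT.fixedPoint, ⟨hT.fixedPoint_isFixedPt, fun g hg => hT.fixedPoint_unique hg⟩,
    fun f₀ => ?_⟩
  have h := tendsto_iff_dist_tendsto_zero.1 (hT.tendsto_iterate_fixedPoint f₀)
  refine h.congr fun n => ?_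
  rw [supNorm_eq_norm, dist_eq_norm]
  rfl
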